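/- arXiv:2205.09160 — 3 statements merged into one kernel-verified Lean document; each statement's English description precedes it below -/
import Mathlib

section
/- Let f : ℝⁿ → ℝ be a twice continuously differentiable function. For Lebesgue-almost every l ∈ ℝⁿ, the regularized function f_l(x) = f(x) + ⟨l, x⟩ satisfies the strict saddle property: every critical point x of f_l is either a strict local minimum of f_l (its Hessian ∇²f(x) is positive definite) or its Hessian ∇²f(x) has a negative eigenvalue. In particular, every saddle point of f_l (a critical point that is neither a local minimum nor a local maximum of f_l) is a strict saddle. -/
/-!
The gradient `∇f` is `C¹`, and `x` is critical for `f_l` exactly when `l = -∇f(x)`. By Sard's theorem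
in equal dimensions, the image under `∇f` of the set where the Hessian `D(∇f)` is singular is
Lebesgue-null, so for almost every `l` every critical point of `f_l` has an invertible Hessian.

An invertible symmetric operator without negative directions is positive definite, since the
isotropic vectors of a positive semidefinite form lie in its kernel. This is the first claim.
For the second one, a critical point with positive definite Hessian is a local minimum
(`isLocalMin_of_hessian_pos`): coercivity of the Hessian makes `f_l` nondecreasing along every short
ray issued from that point. Hence a critical point which is not a local minimum has a
negative direction.
-/

open MeasureTheory Filter Topology
open scoped RealInnerProductSpace


section Helpers

variable {E : Type*} [NormedAddCommGroup E] [InnerProductSpace ℝ E]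

lemma hasGradientAt_add_inner [CompleteSpace E] {f : E → ℝ} (l : E) {x : E}
    (hf : DifferentiableAt ℝ f x) :
    HasGradientAt (fun y => f y + ⟪l, y⟫) (gradient f x + l) x := by
  rw [hasGradientAt_iff_hasFDerivAt, map_add]
  exact (hasGradientAt_iff_hasFDerivAt.1 hf.hasGradientAt).add
    (InnerProductSpace.toDual ℝ E l).hasFDerivAt

lemma contDiff_gradient [CompleteSpace E] {f : E → ℝ} (hf : ContDiff ℝ 2 f) :
    ContDiff ℝ 1 (gradient f) :=
  (InnerProductSpace.toDual ℝ E).symm.toContinuousLinearEquiv.contDiff.comp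
    (hf.fderiv_right (m := 1) (by norm_num))

lemma hessian_symm [CompleteSpace E] {f : E → ℝ} (hf : ContDiff ℝ 2 f) (x u v : E) :
    ⟪u, fderiv ℝ (gradient f) x v⟫ = ⟪v, fderiv ℝ (gradient f) x u⟫ := by
  have key : ∀ a b : E, ⟪a, fderiv ℝ (gradient f) x b⟫ = fderiv ℝ (fderiv ℝ f) x b a := by
    intro a b
    have hd : DifferentiableAt ℝ (gradient f) x :=
      (contDiff_gradient hf).differentiable one_ne_zero x
    have hF : fderiv ℝ f = fun y => InnerProductSpace.toDual ℝ E (gradient f y) := by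
      funext y
      simp [gradient]
    have h2 : HasFDerivAt (fderiv ℝ f)
        ((InnerProductSpace.toDual ℝ E).toContinuousLinearEquiv.toContinuousLinearMap.comp
          (fderiv ℝ (gradient f) x)) x := by
      rw [hF]
      exact ((InnerProductSpace.toDual ℝ E).toContinuousLinearEquiv.toContinuousLinearMap
        |>.hasFDerivAt.comp x hd.hasFDerivAt)
    rw [h2.fderiv]
    simp [real_inner_comm]
  rw [key, key]
  exact (hf.contDiffAt.isSymmSndFDerivAt (by simp)) v u

/-- An isotropic vector of a positive semidefinite symmetric operator lies in its kernel. -/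
lemma apply_eq_zero_of_inner_eq_zero {A : E →L[ℝ] E} (hs : ∀ u v, ⟪u, A v⟫ = ⟪v, A u⟫)
    (hp : ∀ u, 0 ≤ ⟪u, A u⟫) {u : E} (hu : ⟪u, A u⟫ = 0) : A u = 0 := by
  -- the quadratic `t ↦ ⟪u + t • A u, A (u + t • A u)⟫` is nonnegative and vanishes at `0`,
  -- so its linear coefficient `2 * ⟪A u, A u⟫` vanishes
  have h : ∀ t : ℝ, 0 ≤ ⟪A u, A (A u)⟫ * (t * t) + (2 * ⟪A u, A u⟫) * t + 0 := by
    intro t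
    have h1 := hp (u + t • A u)
    simp only [map_add, map_smul, inner_add_left, inner_add_right, real_inner_smul_left,
      real_inner_smul_right, hu, hs u (A u)] at h1
    linarith
  have hd := discrim_le_zero h
  simp only [discrim] at hd
  have : ⟪A u, A u⟫ = 0 := by nlinarith [sq_nonneg ⟪A u, A u⟫]
  exact inner_self_eq_zero.1 this

lemma exists_coercive [FiniteDimensional ℝ E] {A : E →L[ℝ] E}
    (hA : ∀ u, u ≠ 0 → 0 < ⟪u, A u⟫) : ∃ c > 0, ∀ u, c * ‖u‖ ^ 2 ≤ ⟪u, A u⟫ := by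
  rcases (Metric.sphere (0 : E) 1).eq_empty_or_nonempty with h | h
  · refine ⟨1, one_pos, fun u => ?_⟩
    have : u = 0 := by
      by_contra hu
      have hm : ‖u‖⁻¹ • u ∈ Metric.sphere (0 : E) 1 := by
        simp [norm_smul, hu]
      simp [h] at hm
    simp [this]
  · obtain ⟨w, hw, hmin⟩ := (isCompact_sphere (0 : E) 1).exists_isMinOn h
      (f := fun u => ⟪u, A u⟫) (by fun_prop)
    have hw0 : w ≠ 0 := by
      rintro rfl
      simp at hw
    refine ⟨⟪w, A w⟫, hA w hw0, fun u => ?_⟩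
    by_cases hu : u = 0
    · simp [hu]
    have hn : 0 < ‖u‖ := norm_pos_iff.2 hu
    have h1 : ⟪w, A w⟫ ≤ ⟪‖u‖⁻¹ • u, A (‖u‖⁻¹ • u)⟫ :=
      hmin (by simp [norm_smul, hu])
    rw [map_smul, real_inner_smul_left, real_inner_smul_right] at h1
    calc ⟪w, A w⟫ * ‖u‖ ^ 2 ≤ (‖u‖⁻¹ * (‖u‖⁻¹ * ⟪u, A u⟫)) * ‖u‖ ^ 2 := by gcongr
      _ = ⟪u, A u⟫ := by field_simp

/-- Second derivative test: a zero of the gradient field at which the derivative of that field is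
positive definite is a local minimum. -/
lemma isLocalMin_of_hessian_pos [FiniteDimensional ℝ E] {g : E → ℝ} {G : E → E}
    (hg : ∀ y, HasGradientAt g (G y) y) {x : E} {A : E →L[ℝ] E} (hG : HasFDerivAt G A x)
    (hx : G x = 0) (hA : ∀ u, u ≠ 0 → 0 < ⟪u, A u⟫) : IsLocalMin g x := by
  obtain ⟨c, hc, hcA⟩ := exists_coercive hA
  have hev := hG.isLittleO.def hc
  obtain ⟨r, hr, hball⟩ := Metric.eventually_nhds_iff_ball.1 hev
  have hpos : ∀ y ∈ Metric.ball x r, 0 ≤ ⟪y - x, G y⟫ := by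
    intro y hy
    have h1 := hball y hy
    rw [hx, sub_zero] at h1
    have h2 : -(c * ‖y - x‖ ^ 2) ≤ ⟪y - x, G y - A (y - x)⟫ := by
      have h3 := (abs_le.1 (abs_real_inner_le_norm (y - x) (G y - A (y - x)))).1
      have h4 := mul_le_mul_of_nonneg_left h1 (norm_nonneg (y - x))
      nlinarith
    rw [inner_sub_right] at h2
    linarith [hcA (y - x)]
  filter_upwards [Metric.ball_mem_nhds x hr] with y hy
  have hder : ∀ t : ℝ, HasDerivAt (fun t : ℝ => g (x + t • (y - x)))
      ⟪G (x + t • (y - x)), y - x⟫ t := by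
    intro t
    have hl : HasDerivAt (fun t : ℝ => x + t • (y - x)) (y - x) t := by
      simpa using ((hasDerivAt_id t).smul_const (y - x)).const_add x
    have h := (hg (x + t • (y - x))).hasFDerivAt.comp_hasDerivAt t hl
    rw [InnerProductSpace.toDual_apply_apply] at h
    exact h
  have hmono : MonotoneOn (fun t : ℝ => g (x + t • (y - x))) (Set.Icc 0 1) := by
    refine monotoneOn_of_deriv_nonneg (convex_Icc 0 1)
      (fun t _ => (hder t).continuousAt.continuousWithinAt)
      (fun t _ => (hder t).differentiableAt.differentiableWithinAt) ?_
    intro t ht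
    rw [interior_Icc] at ht
    rw [(hder t).deriv]
    have hz : x + t • (y - x) ∈ Metric.ball x r := by
      rw [mem_ball_iff_norm] at hy ⊢
      rw [add_sub_cancel_left, norm_smul, Real.norm_of_nonneg ht.1.le]
      nlinarith [norm_nonneg (y - x), ht.2]
    have h := hpos _ hz
    rw [add_sub_cancel_left, real_inner_smul_left, real_inner_comm] at h
    exact nonneg_of_mul_nonneg_right h ht.1
  simpa using hmono (by simp) (by simp) zero_le_one

end Helpers

/-- For a `C²` function `f : ℝⁿ → ℝ` and almost every `l ∈ ℝⁿ`,
the regularized function `f_l(x) = f(x) + ⟨l, x⟩` satisfies the strict saddle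
property: every critical point of `f_l` either has positive definite Hessian
(a strict local minimum) or its Hessian has a negative eigenvalue.  In
particular, every saddle point of `f_l` (a critical point that is neither a
local minimum nor a local maximum of `f_l`) is a strict saddle. -/
theorem linear_regularizer_enforces_ssp {n : ℕ} (f : EuclideanSpace ℝ (Fin n) → ℝ)
    (hf : ContDiff ℝ 2 f) :
    ∀ᵐ l ∂(volume : Measure (EuclideanSpace ℝ (Fin n))),
      (∀ x : EuclideanSpace ℝ (Fin n), gradient f x + l = 0 →
        (∀ u, u ≠ 0 → 0 < ⟪u, fderiv ℝ (gradient f) x u⟫) ∨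
        (∃ u, ⟪u, fderiv ℝ (gradient f) x u⟫ < 0)) ∧
      (∀ x : EuclideanSpace ℝ (Fin n), gradient f x + l = 0 →
        ¬ IsLocalMin (fun y => f y + ⟪l, y⟫) x →
        ¬ IsLocalMax (fun y => f y + ⟪l, y⟫) x →
        ∃ u, ⟪u, fderiv ℝ (gradient f) x u⟫ < 0) := by
  have hd : ∀ x, HasFDerivAt (gradient f) (fderiv ℝ (gradient f) x) x := fun x =>
    ((contDiff_gradient hf).differentiable one_ne_zero x).hasFDerivAt
  -- Sard's theorem, for `-∇f`, whose value at a critical point of `f_l` is `l`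
  have hnull : (volume : Measure (EuclideanSpace ℝ (Fin n)))
      ((fun x => -gradient f x) '' {x | (-fderiv ℝ (gradient f) x).det = 0}) = 0 :=
    addHaar_image_eq_zero_of_det_fderivWithin_eq_zero volume
      (fun x _ => (hd x).neg.hasFDerivWithinAt) (fun x hx => hx)
  filter_upwards [measure_eq_zero_iff_ae_notMem.1 hnull] with l hl
  have main : ∀ x, gradient f x + l = 0 →
      (∀ u, u ≠ 0 → 0 < ⟪u, fderiv ℝ (gradient f) x u⟫) ∨
      (∃ u, ⟪u, fderiv ℝ (gradient f) x u⟫ < 0) := by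
    intro x hx
    by_contra! hcon
    obtain ⟨⟨u, hu, hu0⟩, hp⟩ := hcon
    have hker := apply_eq_zero_of_inner_eq_zero (hessian_symm hf x) hp
      (le_antisymm hu0 (hp u))
    refine hl ⟨x, ?_, neg_eq_of_add_eq_zero_right hx⟩
    refine LinearMap.det_eq_zero_iff_ker_ne_bot.2 fun hbot => hu ?_
    refine LinearMap.ker_eq_bot'.1 hbot u ?_
    simp [hker]
  refine ⟨main, fun x hx hmin _ => (main x hx).resolve_left fun hpos => hmin ?_⟩
  exact isLocalMin_of_hessian_pos (G := fun y => gradient f y + l)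
    (fun y => hasGradientAt_add_inner l (hf.differentiable two_ne_zero y))
    ((hd x).add_const l) hx hpos
end

section
/- Let f : ℝⁿ → ℝ be three times continuously differentiable and let x* ∈ ℝⁿ satisfy: (1) ∇f(x*) = 0 and the symmetric Hessian H = ∇²f(x*) has a one-dimensional kernel spanned by a unit vector v while all its remaining n−1 eigenvalues are positive; (2) l ∈ ℝⁿ satisfies ⟨v, l⟩ ≠ 0; (3) the third derivative satisfies D³f(x*)[v, v, v] ≠ 0. Then there exist an open neighborhood U of x*, a number δ > 0, and a sign σ ∈ {−1, +1} such that for every μ ∈ (0, δ): the equation ∇f(x) + σμ·l = 0 has exactly two solutions in U, each having a non-singular Hessian ∇²f(x), while the equation ∇f(x) − σμ·l = 0 has no solutions in U. -/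
/-!
Lyapunov–Schmidt reduction. Write `G = ∇f`, a `C²` vector field. If `G x + s • l = 0` for some `s`,
then `Ψ x := G x - (⟪v, G x⟫ / ⟪v, l⟫) • l + ⟪v, x - xs⟫ • l` equals `⟪v, x - xs⟫ • l`. Since
`H = DG(xs)` is symmetric with kernel `ℝ v`, its range is orthogonal to `v`, so
`DΨ(xs) u = H u + ⟪v, u⟫ • l` is invertible. By the inverse function theorem all solutions near `xs`,
for all `s` at once, lie on the `C²` curve `γ t = Ψ⁻¹ (t • l)`, and along it `G (γ t) = -h t • l` with
`h t = -⟪v, G (γ t)⟫ / ⟪v, l⟫`. Hence solving `G x + s • l = 0` near `xs` is the same as solving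
`h t = s` near `0` (`lyapunov_schmidt`).

As `γ' 0 = v` and `⟪v, H w⟫ = 0` for all `w`, one gets `h 0 = h' 0 = 0` and
`h'' 0 = -D³f(xs)[v, v, v] / ⟪v, l⟫ ≠ 0`. So, up to the sign `σ` of `h'' 0`, `h` strictly decreases
and then strictly increases, which gives the count (`fold_of_deriv`). At a solution with `t ≠ 0`,
`h' t ≠ 0`; a kernel vector of `DG(γ t)` must be a multiple of `γ' t`, on which `DG` takes the value
`-h' t • l ≠ 0`, so the Hessian is nonsingular.
-/

open Filter Topology
open scoped RealInnerProductSpace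

/-- A continuous function vanishing at `0`, strictly decreasing before `0` and strictly increasing
after it, takes each small positive value exactly twice and no negative value. -/
lemma fold_of_monotone {k : ℝ → ℝ} {ε : ℝ} (hε : 0 < ε)
    (hc : ContinuousOn k (Set.Ioo (-ε) ε)) (h0 : k 0 = 0)
    (hm : StrictMonoOn k (Set.Ico 0 ε)) (ha : StrictAntiOn k (Set.Ioc (-ε) 0)) :
    ∃ δ > 0, ∀ μ ∈ Set.Ioo (0 : ℝ) δ,
      {t | t ∈ Set.Ioo (-ε) ε ∧ k t = μ}.ncard = 2 ∧ ∀ t ∈ Set.Ioo (-ε) ε, k t ≠ -μ := by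
  have h1 : 0 < k (ε / 2) := by
    rw [← h0]; exact hm ⟨le_rfl, hε⟩ ⟨by linarith, by linarith⟩ (by linarith)
  have h2 : 0 < k (-(ε / 2)) := by
    rw [← h0]; exact ha ⟨by linarith, by linarith⟩ ⟨by linarith, le_rfl⟩ (by linarith)
  refine ⟨min (k (ε / 2)) (k (-(ε / 2))), lt_min h1 h2, ?_⟩
  rintro μ ⟨hμ0, hμ⟩
  obtain ⟨hμ1, hμ2⟩ := lt_min_iff.1 hμ
  constructor
  · obtain ⟨b, hb, hkb⟩ := intermediate_value_Icc (by linarith : (0 : ℝ) ≤ ε / 2)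
      (hc.mono fun t ht => ⟨by linarith [ht.1], by linarith [ht.2]⟩)
      (show μ ∈ Set.Icc (k 0) (k (ε / 2)) from ⟨by linarith, hμ1.le⟩)
    obtain ⟨a, ha', hka⟩ := intermediate_value_Icc' (by linarith : -(ε / 2) ≤ 0)
      (hc.mono fun t ht => ⟨by linarith [ht.1], by linarith [ht.2]⟩)
      (show μ ∈ Set.Icc (k 0) (k (-(ε / 2))) from ⟨by linarith, hμ2.le⟩)
    have hb0 : 0 < b := lt_of_le_of_ne hb.1 (by rintro rfl; linarith)
    have ha0 : a < 0 := lt_of_le_of_ne ha'.2 (by rintro rfl; linarith)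
    have : {t | t ∈ Set.Ioo (-ε) ε ∧ k t = μ} = {a, b} := by
      ext t
      simp only [Set.mem_ofPred_eq, Set.mem_insert_iff, Set.mem_singleton_iff]
      constructor
      · rintro ⟨ht, hkt⟩
        rcases le_total t 0 with h | h
        · exact Or.inl (ha.injOn ⟨ht.1, h⟩ ⟨by linarith [ha'.1], ha'.2⟩ (hkt.trans hka.symm))
        · exact Or.inr (hm.injOn ⟨h, ht.2⟩ ⟨hb.1, by linarith [hb.2]⟩ (hkt.trans hkb.symm))
      · rintro (rfl | rfl)
        · exact ⟨⟨by linarith [ha'.1], by linarith⟩, hka⟩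
        · exact ⟨⟨by linarith, by linarith [hb.2]⟩, hkb⟩
    rw [this, Set.ncard_pair (by linarith)]
  · intro t ht hkt
    rcases le_total t 0 with h | h
    · have := ha.antitoneOn ⟨ht.1, h⟩ ⟨by linarith, le_rfl⟩ h
      linarith
    · have := hm.monotoneOn ⟨le_rfl, hε⟩ ⟨h, ht.2⟩ h
      linarith

/-- The fold in one variable: if `k 0 = k' 0 = 0` and `k'' 0 > 0`, then near `0` the level `μ` is
attained twice and the level `-μ` never, for small `μ > 0`. The interval can be shrunk so that a
given property `P`, true near `0`, holds on all of it. -/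
lemma fold_of_deriv {k k' : ℝ → ℝ} {κ : ℝ} (hκ : 0 < κ) (h0 : k 0 = 0) (h0' : k' 0 = 0)
    (hk : ∀ᶠ t in 𝓝 0, HasDerivAt k (k' t) t) (hk' : HasDerivAt k' κ 0)
    {P : ℝ → Prop} (hP : ∀ᶠ t in 𝓝 0, P t) :
    ∃ ε > 0, (∀ t ∈ Set.Ioo (-ε) ε, P t) ∧ (∀ t ∈ Set.Ioo (-ε) ε, t ≠ 0 → k' t ≠ 0) ∧
      ∃ δ > 0, ∀ μ ∈ Set.Ioo (0 : ℝ) δ,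
        {t | t ∈ Set.Ioo (-ε) ε ∧ k t = μ}.ncard = 2 ∧
          ∀ t ∈ Set.Ioo (-ε) ε, k t ≠ -μ := by
  have hs : ∀ᶠ t in 𝓝 (0 : ℝ), t ≠ 0 → 0 < t⁻¹ * k' t := by
    have := (hasDerivAt_iff_tendsto_slope.1 hk').eventually (lt_mem_nhds hκ)
    rw [eventually_nhdsWithin_iff] at this
    filter_upwards [this] with t ht hne
    simpa [slope, h0'] using ht hne
  obtain ⟨ε, hε, hall⟩ := Metric.eventually_nhds_iff.1 ((hk.and hP).and hs)
  have hall' : ∀ t ∈ Set.Ioo (-ε) ε,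
      (HasDerivAt k (k' t) t ∧ P t) ∧ (t ≠ 0 → 0 < t⁻¹ * k' t) := fun t ht =>
    hall (by rw [Real.dist_eq, sub_zero, abs_lt]; exact ht)
  have hc : ContinuousOn k (Set.Ioo (-ε) ε) := fun t ht =>
    (hall' t ht).1.1.continuousAt.continuousWithinAt
  refine ⟨ε, hε, fun t ht => (hall' t ht).1.2, fun t ht hne h => ?_,
    fold_of_monotone hε hc h0 ?_ ?_⟩
  · have := (hall' t ht).2 hne
    simp [h] at this
  · refine strictMonoOn_of_deriv_pos (convex_Ico 0 ε)
      (hc.mono fun t ht => ⟨by linarith [ht.1], ht.2⟩) fun t ht => ?_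
    rw [interior_Ico] at ht
    have := hall' t ⟨by linarith [ht.1], ht.2⟩
    rw [this.1.1.deriv]
    exact pos_of_mul_pos_right (this.2 ht.1.ne') (inv_nonneg.2 ht.1.le)
  · refine strictAntiOn_of_deriv_neg (convex_Ioc (-ε) 0)
      (hc.mono fun t ht => ⟨ht.1, by linarith [ht.2]⟩) fun t ht => ?_
    rw [interior_Ioc] at ht
    have := hall' t ⟨ht.1, by linarith [ht.2]⟩
    rw [this.1.1.deriv]
    exact neg_of_mul_pos_right (this.2 ht.2.ne) (inv_nonpos.2 ht.2.le)

/-- Lyapunov–Schmidt reduction of `G x + s • l = 0` near a zero `xs` of `G` where `DG` is symmetric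
with kernel `ℝ v`: on the neighbourhood `S` the solutions, for all `s`, lie on the curve `γ`
parametrized by `⟪v, x - xs⟫`, and `s = h t` along it; a regular point of `h` is a nondegenerate
zero. The last conjunct computes the second derivative of `h` at `0`. -/
lemma lyapunov_schmidt {E : Type*} [NormedAddCommGroup E] [InnerProductSpace ℝ E]
    [FiniteDimensional ℝ E] {G : E → E} (hG : ContDiff ℝ 2 G) {xs v l : E} (h0 : G xs = 0)
    (hsymm : ∀ u w, ⟪fderiv ℝ G xs u, w⟫ = ⟪u, fderiv ℝ G xs w⟫) (hv : ‖v‖ = 1)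
    (hker : fderiv ℝ G xs v = 0) (hker' : ∀ u, fderiv ℝ G xs u = 0 → ∃ c : ℝ, u = c • v)
    (hl : ⟪v, l⟫ ≠ 0) :
    ∃ (S : Set E) (γ : ℝ → E) (h h' : ℝ → ℝ), IsOpen S ∧ xs ∈ S ∧
      (∀ x ∈ S, ∀ s : ℝ, G x + s • l = 0 → γ ⟪v, x - xs⟫ = x) ∧
      (∀ᶠ t in 𝓝 0, γ t ∈ S ∧ ⟪v, γ t - xs⟫ = t ∧ G (γ t) = -(h t • l) ∧
        (h' t ≠ 0 → Function.Injective (fderiv ℝ G (γ t)))) ∧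
      (∀ᶠ t in 𝓝 0, HasDerivAt h (h' t) t) ∧ h 0 = 0 ∧ h' 0 = 0 ∧
      HasDerivAt h' (-(⟪v, fderiv ℝ (fderiv ℝ G) xs v v⟫ / ⟪v, l⟫)) 0 := by
  have hvv : ⟪v, v⟫ = 1 := by rw [real_inner_self_eq_norm_sq, hv, one_pow]
  have hGd : ∀ x, HasFDerivAt G (fderiv ℝ G x) x := fun x =>
    ((hG.differentiable (by norm_num)) x).hasFDerivAt
  have hran : ∀ u, ⟪v, fderiv ℝ G xs u⟫ = 0 := fun u => by rw [← hsymm, hker, inner_zero_left]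
  set Ψ : E → E := fun x => G x - (⟪v, G x⟫ / ⟪v, l⟫) • l + ⟪v, x - xs⟫ • l with hΨdef
  have hvΨ : ∀ x, ⟪v, Ψ x⟫ = ⟪v, x - xs⟫ * ⟪v, l⟫ := fun x => by
    simp only [hΨdef, inner_add_right, inner_sub_right, real_inner_smul_right]
    field_simp
    ring
  have hΨc : ContDiff ℝ 2 Ψ := by
    have h1 : ContDiff ℝ 2 fun x => ⟪v, G x⟫ := contDiff_const.inner ℝ hG
    have h2 : ContDiff ℝ 2 fun x => ⟪v, x - xs⟫ :=
      contDiff_const.inner ℝ (contDiff_id.sub contDiff_const)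
    exact (hG.sub ((h1.div_const _).smul contDiff_const)).add (h2.smul contDiff_const)
  have hΨd : ∀ x, HasFDerivAt Ψ (fderiv ℝ Ψ x) x := fun x =>
    ((hΨc.differentiable (by norm_num)) x).hasFDerivAt
  have hΨf : ∀ x u, fderiv ℝ Ψ x u =
      fderiv ℝ G x u - (⟪v, fderiv ℝ G x u⟫ / ⟪v, l⟫) • l + ⟪v, u⟫ • l := fun x u => by
    have h1 := (innerSL ℝ v).hasFDerivAt.comp x (hGd x)
    have h2 := (innerSL ℝ v).hasFDerivAt.comp x ((hasFDerivAt_id x).sub_const xs)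
    have := ((hGd x).sub ((h1.mul_const (⟪v, l⟫)⁻¹).smul_const l)).add (h2.smul_const l)
    have h3 : HasFDerivAt Ψ _ x := this
    rw [h3.fderiv]
    simp [div_eq_inv_mul]
  have hinj : Function.Injective (fderiv ℝ Ψ xs) := by
    rw [injective_iff_map_eq_zero]
    intro u hu
    rw [hΨf, hran, zero_div, zero_smul, sub_zero] at hu
    have h1 : ⟪v, u⟫ = 0 := by
      have := congrArg (fun y => ⟪v, y⟫) hu
      simpa [inner_add_right, hran, real_inner_smul_right, hl] using this
    rw [h1, zero_smul, add_zero] at hu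
    obtain ⟨c, rfl⟩ := hker' u hu
    rw [real_inner_smul_right, hvv, mul_one] at h1
    rw [h1, zero_smul]
  let e : E ≃L[ℝ] E :=
    (LinearEquiv.ofInjectiveEndo (fderiv ℝ Ψ xs : E →ₗ[ℝ] E) hinj).toContinuousLinearEquiv
  have he : (e : E →L[ℝ] E) = fderiv ℝ Ψ xs := by ext u; rfl
  have hΨe : HasFDerivAt Ψ (e : E →L[ℝ] E) xs := he ▸ hΨd xs
  let Φ := hΨc.contDiffAt.toOpenPartialHomeomorph Ψ hΨe (by norm_num)
  have hΦ : ∀ x, Φ x = Ψ x := fun x => rfl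
  have hxs : xs ∈ Φ.source := hΨc.contDiffAt.mem_toOpenPartialHomeomorph_source hΨe (by norm_num)
  have hΨ0 : Ψ xs = 0 := by simp [hΨdef, h0]
  have h0t : (0 : E) ∈ Φ.target := by
    rw [← hΨ0, ← hΦ]; exact Φ.map_source hxs
  have hs0 : Φ.symm 0 = xs := by
    rw [← hΨ0, ← hΦ]; exact Φ.left_inv hxs
  have hsc : ContDiffAt ℝ 2 Φ.symm 0 :=
    Φ.contDiffAt_symm (f₀' := e) h0t (by rw [hs0]; exact hΨe) hΨc.contDiffAt
  set γ : ℝ → E := fun t => Φ.symm (t • l) with hγdef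
  have hγ0 : γ 0 = xs := by simp [hγdef, hs0]
  have hγc : ContDiffAt ℝ 2 γ 0 := by
    have h1 : ContDiffAt ℝ 2 (fun t : ℝ => t • l) 0 := contDiffAt_id.smul contDiffAt_const
    exact ContDiffAt.comp (0 : ℝ) (by rw [zero_smul]; exact hsc) h1
  have htar : ∀ᶠ t : ℝ in 𝓝 0, t • l ∈ Φ.target := by
    have hc : ContinuousAt (fun t : ℝ => t • l) 0 := by fun_prop
    exact hc.eventually_mem (by rw [zero_smul]; exact Φ.open_target.mem_nhds h0t)
  have hΨγ : ∀ᶠ t : ℝ in 𝓝 0, Ψ (γ t) = t • l := by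
    filter_upwards [htar] with t ht using Φ.right_inv ht
  have hγd : ∀ᶠ t in 𝓝 0, HasDerivAt γ (deriv γ t) t := by
    have := hγc.eventually (by simp)
    filter_upwards [this] with t ht
    exact (ht.differentiableAt (by norm_num)).hasDerivAt
  have hγd2 : DifferentiableAt ℝ (deriv γ) 0 := by
    have h1 : ContDiffAt ℝ 1 (fderiv ℝ γ) 0 := hγc.fderiv_right (by norm_num)
    have h2 := h1.differentiableAt (by norm_num)
    exact (h2.clm_apply (differentiableAt_const (1 : ℝ)))
  -- Differentiating `Ψ (γ t) = t • l`.
  have hΨγ' : ∀ᶠ t in 𝓝 0, fderiv ℝ Ψ (γ t) (deriv γ t) = l := by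
    filter_upwards [hΨγ.eventually_nhds, hγd] with t ht hd
    have h1 := (hΨd (γ t)).comp_hasDerivAt t hd
    have h2 : HasDerivAt (fun t : ℝ => t • l) ((1 : ℝ) • l) t := (hasDerivAt_id t).smul_const l
    rw [one_smul] at h2
    exact h1.unique (h2.congr_of_eventuallyEq ht)
  have hγ'0 : deriv γ 0 = v := by
    have := hΨγ'.self_of_nhds
    rw [hγ0] at this
    apply hinj
    rw [this, hΨf, hker, hvv]
    simp
  have hinjγ : ∀ᶠ t in 𝓝 0, Function.Injective (fderiv ℝ Ψ (γ t)) := by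
    have hc : ContinuousAt (fun t => fderiv ℝ Ψ (γ t)) 0 :=
      (hΨc.continuous_fderiv (by norm_num)).continuousAt.comp hγc.continuousAt
    have : Set.range ((↑) : (E ≃L[ℝ] E) → E →L[ℝ] E) ∈ 𝓝 (fderiv ℝ Ψ (γ 0)) := by
      rw [hγ0, ← he]; exact ContinuousLinearEquiv.nhds e
    filter_upwards [hc.eventually_mem this] with t ht
    obtain ⟨e', he'⟩ := ht
    rw [← he']
    exact e'.injective
  have hGγ : ∀ᶠ t in 𝓝 0, ⟪v, γ t - xs⟫ = t ∧ G (γ t) = -(-(⟪v, G (γ t)⟫ / ⟪v, l⟫) • l) := by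
    filter_upwards [hΨγ] with t ht
    have h1 : ⟪v, γ t - xs⟫ = t := by
      have := hvΨ (γ t)
      rw [ht, real_inner_smul_right] at this
      exact (mul_right_cancel₀ hl this).symm
    refine ⟨h1, ?_⟩
    simp only [hΨdef, h1] at ht
    rw [neg_smul, neg_neg]
    exact sub_eq_zero.1 (add_eq_right.1 ht)
  refine ⟨Φ.source, γ, fun t => -(⟪v, G (γ t)⟫ / ⟪v, l⟫),
    fun t => -(⟪v, fderiv ℝ G (γ t) (deriv γ t)⟫ / ⟪v, l⟫), Φ.open_source, hxs, ?_, ?_, ?_, ?_, ?_, ?_⟩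
  · intro x hx s hs
    have : Ψ x = ⟪v, x - xs⟫ • l := by
      simp only [hΨdef]
      rw [eq_neg_of_add_eq_zero_left hs, inner_neg_right, real_inner_smul_right, neg_div,
        mul_div_cancel_right₀ _ hl, neg_smul]
      abel
    simp only [hγdef]
    rw [← this, ← hΦ, Φ.left_inv hx]
  · filter_upwards [hGγ, htar, hinjγ, hΨγ'] with t h1 h2 h3 h4
    refine ⟨Φ.map_target h2, h1.1, h1.2, fun hne => ?_⟩
    -- A kernel vector `u` of `DG` has `DΨ u = ⟪v, u⟫ • l`, hence is a multiple of `γ'`.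
    rw [injective_iff_map_eq_zero]
    intro u hu
    have hu' : u = ⟪v, u⟫ • deriv γ t := by
      apply h3
      rw [map_smul, h4, hΨf, hu]
      simp
    have h5 : ⟪v, u⟫ * ⟪v, fderiv ℝ G (γ t) (deriv γ t)⟫ = 0 := by
      rw [← real_inner_smul_right, ← map_smul, ← hu', hu, inner_zero_right]
    rcases mul_eq_zero.1 h5 with h | h
    · rw [hu', h, zero_smul]
    · simp [h] at hne
  · filter_upwards [hγd] with t ht
    have := (innerSL ℝ v).hasFDerivAt.comp_hasDerivAt t ((hGd (γ t)).comp_hasDerivAt t ht)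
    exact (this.div_const _).neg
  · simp [hγ0, h0]
  · simp [hγ0, hran]
  · have hG2 : HasFDerivAt (fderiv ℝ G) (fderiv ℝ (fderiv ℝ G) xs) (γ 0) := by
      rw [hγ0]
      exact ((hG.fderiv_right (m := 1) (by norm_num)).differentiable (by norm_num) xs).hasFDerivAt
    have h1 := (hG2.comp_hasDerivAt 0 hγd.self_of_nhds).clm_apply hγd2.hasDerivAt
    have h2 := ((innerSL ℝ v).hasFDerivAt.comp_hasDerivAt 0 h1).div_const ⟪v, l⟫ |>.neg
    convert! h2 using 1
    simp [hγ0, hγ'0, inner_add_right, hran]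

lemma contDiff_gradient_s5 {n : ℕ} {f : EuclideanSpace ℝ (Fin n) → ℝ} (hf : ContDiff ℝ 3 f) :
    ContDiff ℝ 2 (gradient f) := by
  rw [contDiff_euclidean]
  intro i
  have : (fun x => gradient f x i) = fun x => fderiv ℝ f x (EuclideanSpace.single i 1) := by
    ext x
    rw [← inner_gradient_left, EuclideanSpace.inner_single_right]
    simp
  rw [this]
  exact (hf.fderiv_right (m := 2) (by norm_num)).clm_apply contDiff_const

lemma iteratedFDeriv_three_eq {n : ℕ} {f : EuclideanSpace ℝ (Fin n) → ℝ} (hf : ContDiff ℝ 3 f)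
    (x v : EuclideanSpace ℝ (Fin n)) :
    iteratedFDeriv ℝ 3 f x ![v, v, v] = ⟪v, fderiv ℝ (fderiv ℝ (gradient f)) x v v⟫ := by
  have h : fderiv ℝ f = innerSL ℝ ∘ gradient f := by
    ext y u
    simp [inner_gradient_left]
  rw [iteratedFDeriv_succ_apply_right]
  change iteratedFDeriv ℝ 2 (fderiv ℝ f) x _ _ = _
  rw [h, ContinuousLinearMap.iteratedFDeriv_comp_left _ (contDiff_gradient_s5 hf).contDiffAt le_rfl]
  change innerSL ℝ (iteratedFDeriv ℝ 2 (gradient f) x _) v = _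
  rw [iteratedFDeriv_two_apply, innerSL_apply_apply, real_inner_comm]
  rfl

/-- saddle-node bifurcation: Let `f : ℝⁿ → ℝ` be `C³` and let
`x*` be a critical point whose symmetric Hessian has one-dimensional kernel
spanned by the unit vector `v` and is positive definite on the orthogonal
complement of `v`.  If `⟨v, l⟩ ≠ 0` and `D³f(x*)[v,v,v] ≠ 0`, then there are a
neighborhood `U` of `x*`, `δ > 0` and a sign `σ ∈ {−1, 1}` such that for all
`μ ∈ (0, δ)` the equation `∇f(x) + σμ·l = 0` has exactly two solutions in `U`,
both with non-singular Hessian, while `∇f(x) − σμ·l = 0` has no solutions in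
`U`. -/
theorem saddle_node_bifurcation {n : ℕ} (f : EuclideanSpace ℝ (Fin n) → ℝ)
    (hf : ContDiff ℝ 3 f) (xs : EuclideanSpace ℝ (Fin n))
    (hcrit : gradient f xs = 0)
    (hsymm : ∀ u w, ⟪fderiv ℝ (gradient f) xs u, w⟫ = ⟪u, fderiv ℝ (gradient f) xs w⟫)
    (v : EuclideanSpace ℝ (Fin n)) (hv : ‖v‖ = 1)
    (hker : fderiv ℝ (gradient f) xs v = 0)
    (hker' : ∀ u, fderiv ℝ (gradient f) xs u = 0 → ∃ c : ℝ, u = c • v)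
    (hpos : ∀ u, ⟪u, v⟫ = 0 → u ≠ 0 → 0 < ⟪u, fderiv ℝ (gradient f) xs u⟫)
    (l : EuclideanSpace ℝ (Fin n)) (hl : ⟪v, l⟫ ≠ 0)
    (h3 : iteratedFDeriv ℝ 3 f xs ![v, v, v] ≠ 0) :
    ∃ U : Set (EuclideanSpace ℝ (Fin n)), IsOpen U ∧ xs ∈ U ∧
      ∃ δ > 0, ∃ σ : ℝ, (σ = 1 ∨ σ = -1) ∧
        ∀ μ ∈ Set.Ioo (0 : ℝ) δ,
          {x ∈ U | gradient f x + (σ * μ) • l = 0}.ncard = 2 ∧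
          (∀ x ∈ U, gradient f x + (σ * μ) • l = 0 →
            Function.Bijective (fderiv ℝ (gradient f) x)) ∧
          (∀ x ∈ U, gradient f x - (σ * μ) • l ≠ 0) := by
  rw [iteratedFDeriv_three_eq hf] at h3
  obtain ⟨S, γ, h, h', hSo, hSx, hγS, hγ, hd, hh0, hh0', hd2⟩ :=
    lyapunov_schmidt (contDiff_gradient_s5 hf) hcrit hsymm hv hker hker' hl
  set G := gradient f
  set κ := -(⟪v, fderiv ℝ (fderiv ℝ G) xs v v⟫ / ⟪v, l⟫) with hκdef
  have hκ : κ ≠ 0 := neg_ne_zero.2 (div_ne_zero h3 hl)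
  have hl0 : l ≠ 0 := by rintro rfl; simp at hl
  obtain ⟨σ, hσ, hσκ⟩ : ∃ σ : ℝ, (σ = 1 ∨ σ = -1) ∧ 0 < σ * κ := by
    rcases hκ.lt_or_gt with h | h
    · exact ⟨-1, Or.inr rfl, by linarith⟩
    · exact ⟨1, Or.inl rfl, by linarith⟩
  have hσσ : σ * σ = 1 := by rcases hσ with rfl | rfl <;> norm_num
  obtain ⟨ε, hε, hP, hne, δ, hδ, hcount⟩ :=
    fold_of_deriv (k := fun t => σ * h t) (k' := fun t => σ * h' t) hσκ (by simp [hh0])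
      (by simp [hh0']) (hd.mono fun t ht => ht.const_mul σ) (hd2.const_mul σ) hγ
  -- On the curve, `G + s • l = 0` reads `h t = s`.
  have hiff : ∀ t ∈ Set.Ioo (-ε) ε, ∀ s : ℝ, G (γ t) + (σ * s) • l = 0 ↔ σ * h t = s := by
    intro t ht s
    rw [(hP t ht).2.2.1, neg_add_eq_zero]
    constructor
    · intro hs
      rw [smul_left_injective ℝ hl0 hs, ← mul_assoc, hσσ, one_mul]
    · rintro rfl
      rw [← mul_assoc, hσσ, one_mul]
  have hUγ : ∀ x ∈ S ∩ {x | ⟪v, x - xs⟫ ∈ Set.Ioo (-ε) ε}, ∀ s : ℝ, G x + (σ * s) • l = 0 →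
      ∃ t ∈ Set.Ioo (-ε) ε, σ * h t = s ∧ γ t = x := by
    rintro x ⟨hxS, hx⟩ s hs
    have := hγS x hxS _ hs
    exact ⟨_, hx, (hiff _ hx s).1 (by rw [this]; exact hs), this⟩
  refine ⟨S ∩ {x | ⟪v, x - xs⟫ ∈ Set.Ioo (-ε) ε}, ?_, ⟨hSx, by simp [hε]⟩, δ, hδ, σ, hσ, ?_⟩
  · exact hSo.inter (isOpen_Ioo.preimage (by fun_prop))
  intro μ hμ
  refine ⟨?_, ?_, ?_⟩
  · rw [← (hcount μ hμ).1]
    have himg : {x ∈ S ∩ {x | ⟪v, x - xs⟫ ∈ Set.Ioo (-ε) ε} | G x + (σ * μ) • l = 0} =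
        γ '' {t | t ∈ Set.Ioo (-ε) ε ∧ σ * h t = μ} := by
      ext x
      constructor
      · rintro ⟨hxU, hx⟩
        obtain ⟨t, ht, hts, htx⟩ := hUγ x hxU μ hx
        exact ⟨t, ⟨ht, hts⟩, htx⟩
      · rintro ⟨t, ⟨ht, hts⟩, rfl⟩
        have hPt := hP t ht
        refine ⟨⟨hPt.1, ?_⟩, (hiff t ht μ).2 hts⟩
        change ⟪v, γ t - xs⟫ ∈ Set.Ioo (-ε) ε
        rwa [hPt.2.1]
    rw [himg]
    refine Set.InjOn.ncard_image fun t ht t' ht' htt => ?_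
    rw [← (hP t ht.1).2.1, htt, (hP t' ht'.1).2.1]
  · intro x hxU hx
    obtain ⟨t, ht, hts, rfl⟩ := hUγ x hxU μ hx
    have ht0 : t ≠ 0 := by
      rintro rfl
      rw [hh0, mul_zero] at hts
      exact hμ.1.ne hts
    have hi := (hP t ht).2.2.2 (right_ne_zero_of_mul (hne t ht ht0))
    exact ⟨hi, LinearMap.injective_iff_surjective (f := (fderiv ℝ G (γ t)).toLinearMap) |>.1 hi⟩
  · intro x hxU hx
    obtain ⟨t, ht, hts, -⟩ := hUγ x hxU (-μ) (by rw [mul_neg, neg_smul, ← sub_eq_add_neg, hx])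
    exact (hcount μ hμ).2 t ht hts
end

section
/- Let f : ℝⁿ → ℝ be twice continuously differentiable with L-Lipschitz gradient, let γ ∈ (0, 1/L), let θ > 0, let x* be a critical point of f, and let Θ(x*) be the connected component of L_θ = {x : ‖∇f(x)‖ ≤ θ} containing x*. Let l ∈ ℝⁿ be such that every point y ∈ Θ(x*) with ∇f(y) + l = 0 has a Hessian ∇²f(y) with a negative eigenvalue (i.e., every critical point of f_l in Θ(x*) is a strict saddle of f_l). Define the regularized gradient-descent map g_l(x) = x − γ(∇f(x) + l). Then the set of initial conditions x₀ ∈ ℝⁿ such that the iterate sequence (g_lᵏ(x₀))_{k∈ℕ} converges to a limit and satisfies g_lᵏ(x₀) ∈ Θ(x*) for every k ∈ ℕ has Lebesgue measure zero. In particular, for almost every initial condition whose regularized iterates converge, the iterates exit Θ(x*) after finitely many steps. -/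
/-! Write `g x = x - γ • (∇f x + l)`. A limit `p` of iterates staying in the (closed) component is
a critical point of `f_l` in that component, hence a strict saddle, so it is enough to
show that almost no orbit converges to a strict saddle. Since `g` is anti-Lipschitz, preimages of
null sets under its iterates are null, and by Lindelöf countably many neighbourhoods cover the
saddles. The claim thus becomes local: for every saddle `p` there is a ball `B` such that
`A = {x : gᵏ x ∈ B for all k}` is null (`volume_trapped_eq_zero`).

No invariant manifold is needed for this. Let `H = ∇²f(p)` and pick `c > 0` outside the spectrum of
`-H` and so small that the quadratic form `Q w = ⟪w, (-H - c) w⟫` is positive in some direction `u`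
(`exists_shift`). The linearisation `1 - γH` equals `(1 + γc) + γ(-H - c)`, and the fact that
`-H - c` is bounded below makes `Q (g y - g x) ≥ (1 + γc)² Q (y - x)` for *all* `x, y` close to
`p` (`energy_step`). As `Q` is bounded on differences of points of `B`, iteration forces
`Q (y - x) ≤ 0` for `x, y ∈ A`. Since `Q u > 0`, every line parallel to `u` meets `A` at
most once; so the translates of the closed set `A` by distinct multiples of `u` are pairwise
disjoint, and a set with infinitely many disjoint translates by bounded vectors is null. -/

open MeasureTheory Filter Topology
open scoped RealInnerProductSpace

section Saddle

variable {E : Type*} [NormedAddCommGroup E] [InnerProductSpace ℝ E] [FiniteDimensional ℝ E]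

/-! ### Energy growth near a strict saddle -/

/-- If `H` has a negative direction `u`, then some `c > 0` keeps `-H - c` positive at `u` and is
not an eigenvalue of `-H`, so that `-H - c` is bounded below. -/
lemma exists_shift (H : E →L[ℝ] E) (u : E) (hu : ⟪u, H u⟫ < 0) :
    ∃ c : ℝ, 0 < c ∧ 0 < ⟪u, -H u - c • u⟫ ∧ ∃ d > 0, ∀ w, d * ‖w‖ ≤ ‖-H w - c • w‖ := by
  have hu0 : u ≠ 0 := by rintro rfl; simp at hu
  have hn : 0 < ‖u‖ ^ 2 := by positivity
  have hpos : 0 < -⟪u, H u⟫ / ‖u‖ ^ 2 := div_pos (by linarith) hn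
  obtain ⟨c, ⟨hc0, hc1⟩, hc⟩ := ((Set.Ioo_infinite hpos).sdiff
    (Module.End.finite_hasEigenvalue ((-H : E →L[ℝ] E) : Module.End ℝ E))).nonempty
  refine ⟨c, hc0, ?_, ?_⟩
  · rw [lt_div_iff₀ hn] at hc1
    rw [inner_sub_right, inner_neg_right, inner_smul_right, real_inner_self_eq_norm_sq]
    linarith
  · set M : E →ₗ[ℝ] E := ((-H : E →L[ℝ] E) : E →ₗ[ℝ] E) - c • LinearMap.id with hM
    have hker : LinearMap.ker M = ⊥ := by
      rw [LinearMap.ker_eq_bot']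
      intro w hw
      by_contra hw0
      refine hc (Module.End.hasEigenvalue_of_hasEigenvector (x := w) ⟨?_, hw0⟩)
      rw [Module.End.mem_eigenspace_iff]
      exact sub_eq_zero.mp (by simpa [hM] using hw)
    obtain ⟨K, hK, hKM⟩ := M.exists_antilipschitzWith hker
    have hK' : (0 : ℝ) < K := hK
    refine ⟨(K : ℝ)⁻¹, by positivity, fun w => ?_⟩
    have := hKM.le_mul_dist w 0
    simp only [map_zero, dist_zero_right] at this
    rw [inv_mul_le_iff₀ hK']
    simpa [hM] using this

omit [FiniteDimensional ℝ E] in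
/-- One-step growth of `Q w = ⟪w, M w⟫` under the perturbed linear map
`w ↦ (1 + γc) w + γ M w + γ e`, where `M = -H - c`; the bound `hlow` on `M` says that `H ≤ L` as
forms, and `e` is the linearisation error. -/
lemma energy_step (M : E →L[ℝ] E) (hsym : ∀ v w, ⟪M v, w⟫ = ⟪v, M w⟫) {γ c L d ε : ℝ}
    (hγ : 0 < γ) (hγL : γ * L ≤ 1) (hc : 0 < c) (hd : 0 < d) (hε : 0 ≤ ε)
    (hlow : ∀ v, -(L + c) * ‖v‖ ^ 2 ≤ ⟪v, M v⟫) (hM : ∀ w, d * ‖w‖ ≤ ‖M w‖)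
    (hεd : ε * (2 * ‖M‖ * (1 + γ * c + γ * ‖M‖) + γ * ‖M‖ * ε) ≤ d ^ 2)
    (w e : E) (he : ‖e‖ ≤ ε * ‖w‖) :
    (1 + γ * c) ^ 2 * ⟪w, M w⟫ ≤
      ⟪(1 + γ * c) • w + γ • M w + γ • e, M ((1 + γ * c) • w + γ • M w + γ • e)⟫ := by
  set a := 1 + γ * c with ha
  have ha0 : 0 < a := by positivity
  set z := a • w + γ • M w with hz
  have hzn : ‖z‖ ≤ (a + γ * ‖M‖) * ‖w‖ := by
    calc ‖z‖ ≤ ‖a • w‖ + ‖γ • M w‖ := norm_add_le _ _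
      _ ≤ a * ‖w‖ + γ * (‖M‖ * ‖w‖) := by
        rw [norm_smul, norm_smul, Real.norm_of_nonneg ha0.le, Real.norm_of_nonneg hγ.le]
        gcongr
        exact M.le_opNorm w
      _ = _ := by ring
  have h1 : ⟪z, M z⟫ = a ^ 2 * ⟪w, M w⟫ + 2 * a * γ * ‖M w‖ ^ 2 + γ ^ 2 * ⟪M w, M (M w)⟫ := by
    simp only [hz, map_add, map_smul, inner_add_left, inner_add_right, inner_smul_left,
      inner_smul_right, ← hsym w (M w), real_inner_self_eq_norm_sq, RCLike.conj_to_real]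
    ring
  have h2 : ⟪z + γ • e, M (z + γ • e)⟫ = ⟪z, M z⟫ + 2 * γ * ⟪e, M z⟫ + γ ^ 2 * ⟪e, M e⟫ := by
    simp only [map_add, map_smul, inner_add_left, inner_add_right, inner_smul_left,
      inner_smul_right, ← hsym z e, real_inner_comm e (M z), RCLike.conj_to_real]
    ring
  have h3 : -(ε * ‖w‖ * (‖M‖ * ((a + γ * ‖M‖) * ‖w‖))) ≤ ⟪e, M z⟫ := by
    refine (neg_le_neg ?_).trans (abs_le.mp (abs_real_inner_le_norm e (M z))).1
    gcongr
    exact (M.le_opNorm z).trans (by gcongr)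
  have h4 : -(ε * ‖w‖ * (‖M‖ * (ε * ‖w‖))) ≤ ⟪e, M e⟫ := by
    refine (neg_le_neg ?_).trans (abs_le.mp (abs_real_inner_le_norm e (M e))).1
    gcongr
    exact (M.le_opNorm e).trans (by gcongr)
  have h5 : (d * ‖w‖) ^ 2 ≤ ‖M w‖ ^ 2 := by
    gcongr
    exact hM w
  have h6 := hlow (M w)
  -- the quadratic gain `γ ‖M w‖²` left over after using `γ (L + c) ≤ 1 + γ c = a`
  have h7 : a ^ 2 * ⟪w, M w⟫ + γ * ‖M w‖ ^ 2 ≤ ⟪z, M z⟫ := by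
    rw [h1]
    have h8 : γ ^ 2 * (-(L + c) * ‖M w‖ ^ 2) ≤ γ ^ 2 * ⟪M w, M (M w)⟫ := by gcongr
    have h9 : 0 ≤ γ * ‖M w‖ ^ 2 * (2 * a - 1 - γ * (L + c)) := by
      refine mul_nonneg (by positivity) ?_
      have : 0 < γ * c := by positivity
      rw [ha]; linarith
    linarith
  have h10 : ε * (2 * ‖M‖ * (a + γ * ‖M‖) + γ * ‖M‖ * ε) * (γ * ‖w‖ ^ 2) ≤
      d ^ 2 * (γ * ‖w‖ ^ 2) := by gcongr
  have h11 := mul_le_mul_of_nonneg_left h3 (by positivity : 0 ≤ 2 * γ)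
  have h12 := mul_le_mul_of_nonneg_left h4 (by positivity : 0 ≤ γ ^ 2)
  have h13 := mul_le_mul_of_nonneg_left h5 hγ.le
  rw [h2]
  linarith

/-! ### Null sets -/

variable [MeasurableSpace E] [BorelSpace E]

/-- A closed set on whose differences a quadratic form is nonpositive is null, as soon as the form
is positive somewhere. -/
lemma volume_eq_zero_of_energy_nonpos {A : Set E} (hA : IsClosed A) (M : E →L[ℝ] E) (u : E)
    (hu : 0 < ⟪u, M u⟫) (h : ∀ x ∈ A, ∀ y ∈ A, ⟪y - x, M (y - x)⟫ ≤ 0) : volume A = 0 := by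
  refine Measure.addHaar_eq_zero_of_disjoint_translates volume
    (fun k : ℕ => ((k : ℝ) + 1)⁻¹ • u) ?_ ?_ hA.measurableSet
  · refine isBounded_iff_forall_norm_le.mpr ⟨‖u‖, ?_⟩
    rintro _ ⟨k, rfl⟩
    simp only [norm_smul]
    refine mul_le_of_le_one_left (norm_nonneg _) ?_
    rw [Real.norm_of_nonneg (by positivity)]
    exact inv_le_one_of_one_le₀ (by linarith [k.cast_nonneg (α := ℝ)])
  · intro j k hjk
    simp only [Function.onFun, Set.singleton_add, Set.image_add_left]
    rw [Set.disjoint_left]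
    intro z hz hz'
    have := h _ hz _ hz'
    have he : (-(((k : ℝ) + 1)⁻¹ • u) + z) - (-(((j : ℝ) + 1)⁻¹ • u) + z)
        = (((j : ℝ) + 1)⁻¹ - ((k : ℝ) + 1)⁻¹) • u := by rw [sub_smul]; abel
    rw [he, map_smul, inner_smul_left, inner_smul_right, RCLike.conj_to_real, ← mul_assoc] at this
    have hne : ((j : ℝ) + 1)⁻¹ - ((k : ℝ) + 1)⁻¹ ≠ 0 := by
      rw [sub_ne_zero]
      intro hh
      exact hjk (by exact_mod_cast add_right_cancel (inv_injective hh))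
    exact absurd this (not_le.mpr (mul_pos (mul_self_pos.mpr hne) hu))

/-- Almost no orbit stays forever in a small ball around a point where the derivative `H` of
`G` is symmetric, of norm at most `L ≤ 1 / γ`, and has a negative direction. -/
lemma volume_trapped_eq_zero (G : E → E) (hG : Continuous G) (H : E →L[ℝ] E) (p l u : E)
    (hGp : HasStrictFDerivAt G H p) (hsym : ∀ v w, ⟪H v, w⟫ = ⟪v, H w⟫) {γ L : ℝ}
    (hγ : 0 < γ) (hγL : γ * L ≤ 1) (hH : ‖H‖ ≤ L) (hu : ⟪u, H u⟫ < 0) :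
    ∃ r > 0, volume {x | ∀ k : ℕ, (fun x => x - γ • (G x + l))^[k] x ∈ Metric.closedBall p r}
      = 0 := by
  obtain ⟨c, hc, hcu, d, hd, hM⟩ := exists_shift H u hu
  set M : E →L[ℝ] E := -H - c • ContinuousLinearMap.id ℝ E with hMdef
  have hMw : ∀ w, M w = -H w - c • w := fun w => by simp [hMdef]
  have hMsym : ∀ v w, ⟪M v, w⟫ = ⟪v, M w⟫ := fun v w => by
    simp only [hMw, inner_sub_left, inner_sub_right, inner_neg_left, inner_neg_right,
      inner_smul_left, inner_smul_right, hsym, RCLike.conj_to_real]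
  have hlow : ∀ v, -(L + c) * ‖v‖ ^ 2 ≤ ⟪v, M v⟫ := fun v => by
    have h1 : ⟪v, H v⟫ ≤ ‖v‖ * (L * ‖v‖) :=
      (real_inner_le_norm _ _).trans (by gcongr; exact H.le_of_opNorm_le hH v)
    rw [hMw, inner_sub_right, inner_neg_right, inner_smul_right, real_inner_self_eq_norm_sq]
    linarith
  set C := 2 * ‖M‖ * (1 + γ * c + γ * ‖M‖) + γ * ‖M‖ with hC
  have hC0 : 0 ≤ C := by positivity
  set ε := min 1 (d ^ 2 / (C + 1)) with hεdef
  have hε : 0 < ε := by positivity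
  have hε1 : ε ≤ 1 := min_le_left _ _
  have hεd : ε * (2 * ‖M‖ * (1 + γ * c + γ * ‖M‖) + γ * ‖M‖ * ε) ≤ d ^ 2 := by
    calc ε * (2 * ‖M‖ * (1 + γ * c + γ * ‖M‖) + γ * ‖M‖ * ε)
        ≤ ε * (C + 1) := by
          refine mul_le_mul_of_nonneg_left ?_ hε.le
          have : γ * ‖M‖ * ε ≤ γ * ‖M‖ := mul_le_of_le_one_right (by positivity) hε1
          linarith
      _ ≤ d ^ 2 := by
          rw [← le_div_iff₀ (by positivity)]
          exact min_le_right _ _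
  obtain ⟨s, hs, hsG⟩ := hGp.approximates_deriv_on_nhds (c := ⟨ε, hε.le⟩) (Or.inr hε)
  obtain ⟨r, hr, hrs⟩ := Metric.nhds_basis_closedBall.mem_iff.mp hs
  refine ⟨r, hr, ?_⟩
  set g : E → E := fun x => x - γ • (G x + l) with hg
  have hgc : Continuous g := by fun_prop
  have hstep : ∀ x ∈ Metric.closedBall p r, ∀ y ∈ Metric.closedBall p r,
      (1 + γ * c) ^ 2 * ⟪y - x, M (y - x)⟫ ≤ ⟪g y - g x, M (g y - g x)⟫ := by
    intro x hx y hy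
    have he := hsG y (hrs hy) x (hrs hx)
    have key := energy_step M hMsym hγ hγL hc hd hε.le hlow (fun w => by rw [hMw]; exact hM w)
      hεd (y - x) (-(G y - G x - H (y - x))) (by rw [norm_neg]; exact he)
    have hgg : g y - g x = (1 + γ * c) • (y - x) + γ • M (y - x)
        + γ • (-(G y - G x - H (y - x))) := by
      rw [hMw, hg]
      module
    rw [hgg]
    exact key
  refine volume_eq_zero_of_energy_nonpos ?_ M u (by rw [hMw]; exact hcu) ?_
  · rw [Set.ofPred_forall]
    exact isClosed_iInter fun k => Metric.isClosed_closedBall.preimage (hgc.iterate k)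
  · intro x hx y hy
    by_contra! hpos
    have hgrow : ∀ k : ℕ, ((1 + γ * c) ^ 2) ^ k * ⟪y - x, M (y - x)⟫ ≤
        ⟪g^[k] y - g^[k] x, M (g^[k] y - g^[k] x)⟫ := by
      intro k
      induction k with
      | zero => simp
      | succ k ih =>
        rw [Function.iterate_succ_apply', Function.iterate_succ_apply', pow_succ', mul_assoc]
        exact (mul_le_mul_of_nonneg_left ih (by positivity)).trans (hstep _ (hx k) _ (hy k))
    have hbd : ∀ k : ℕ, ⟪g^[k] y - g^[k] x, M (g^[k] y - g^[k] x)⟫ ≤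
        (2 * r) * (‖M‖ * (2 * r)) := by
      intro k
      have hdist : ‖g^[k] y - g^[k] x‖ ≤ 2 * r := by
        rw [← dist_eq_norm, two_mul]
        exact (dist_triangle_right _ _ p).trans (add_le_add (hy k) (hx k))
      refine (real_inner_le_norm _ _).trans ?_
      gcongr
      exact (M.le_opNorm _).trans (by gcongr)
    have hγc : 0 < γ * c := by positivity
    have ht := (tendsto_pow_atTop_atTop_of_one_lt
      (by nlinarith : 1 < (1 + γ * c) ^ 2)).atTop_mul_const hpos
    obtain ⟨k, hk⟩ := (ht.eventually_gt_atTop ((2 * r) * (‖M‖ * (2 * r)))).exists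
    exact absurd ((hgrow k).trans (hbd k)) (not_le.mpr hk)

/-- Proved with the Hausdorff measure, which in top dimension is a Haar measure. -/
lemma volume_preimage_eq_zero_of_antilipschitz {g : E → E} {K : NNReal}
    (hg : AntilipschitzWith K g) {s : Set E} (hs : volume s = 0) : volume (g ⁻¹' s) = 0 := by
  have h1 : (volume : Measure E) ≪ μH[Module.finrank ℝ E] :=
    Measure.absolutelyContinuous_isAddHaarMeasure _ _
  have h2 : (μH[Module.finrank ℝ E] : Measure E) ≪ volume :=
    Measure.absolutelyContinuous_isAddHaarMeasure _ _
  refine h1 (le_antisymm ?_ bot_le)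
  have := hg.hausdorffMeasure_preimage_le (d := Module.finrank ℝ E) (by positivity) s
  rwa [h2 hs, mul_zero] at this

lemma volume_iterate_preimage_eq_zero {g : E → E} {K : NNReal}
    (hg : AntilipschitzWith K g) {s : Set E} (hs : volume s = 0) (k : ℕ) :
    volume (g^[k] ⁻¹' s) = 0 := by
  induction k with
  | zero => simpa using hs
  | succ k ih =>
    rw [Function.iterate_succ, Set.preimage_comp]
    exact volume_preimage_eq_zero_of_antilipschitz hg ih

omit [FiniteDimensional ℝ E] [MeasurableSpace E] [BorelSpace E] in
/-- A gradient step with `γL < 1` is anti-Lipschitz. -/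
lemma antilipschitz_step {G : E → E} {L γ : ℝ} (hlip : ∀ x y, ‖G x - G y‖ ≤ L * ‖x - y‖)
    (hγ : 0 < γ) (hγL : γ * L < 1) (l : E) :
    AntilipschitzWith (Real.toNNReal (1 - γ * L)⁻¹) (fun x => x - γ • (G x + l)) := by
  refine AntilipschitzWith.of_le_mul_dist fun x y => ?_
  have h0 : 0 < 1 - γ * L := by linarith
  rw [Real.coe_toNNReal _ (by positivity), ← div_eq_inv_mul, le_div_iff₀ h0, dist_eq_norm,
    dist_eq_norm]
  have h1 : x - y = (x - γ • (G x + l) - (y - γ • (G y + l))) + γ • (G x - G y) := by module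
  have h2 : ‖x - y‖ ≤ ‖x - γ • (G x + l) - (y - γ • (G y + l))‖ + γ * (L * ‖x - y‖) := by
    calc ‖x - y‖ ≤ ‖x - γ • (G x + l) - (y - γ • (G y + l))‖ + ‖γ • (G x - G y)‖ := by
          conv_lhs => rw [h1]
          exact norm_add_le _ _
      _ ≤ _ := by
          rw [norm_smul, Real.norm_of_nonneg hγ.le]
          gcongr
          exact hlip x y
  linarith

/-- Almost no orbit of `x ↦ x - γ (G x + l)` converges to a point of `D`, if all points of `D` are
strict saddles. -/
lemma volume_tendsto_saddle_eq_zero (G : E → E) {L γ : ℝ}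
    (hlip : ∀ x y, ‖G x - G y‖ ≤ L * ‖x - y‖) (hL : 0 ≤ L) (hγ : 0 < γ) (hγL : γ * L < 1)
    (hstrict : ∀ p, HasStrictFDerivAt G (fderiv ℝ G p) p)
    (hsym : ∀ p v w, ⟪fderiv ℝ G p v, w⟫ = ⟪v, fderiv ℝ G p w⟫) (l : E) (D : Set E)
    (hD : ∀ p ∈ D, ∃ u, ⟪u, fderiv ℝ G p u⟫ < 0) :
    volume {x₀ | ∃ p ∈ D,
      Tendsto (fun k => (fun x => x - γ • (G x + l))^[k] x₀) atTop (𝓝 p)} = 0 := by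
  set g : E → E := fun x => x - γ • (G x + l) with hg
  have hGc : Continuous G :=
    continuous_iff_continuousAt.mpr fun p => (hstrict p).hasFDerivAt.continuousAt
  have hloc : ∀ p ∈ D, ∃ r > 0,
      volume {x | ∀ k : ℕ, g^[k] x ∈ Metric.closedBall p r} = 0 := by
    intro p hp
    obtain ⟨u, hu⟩ := hD p hp
    exact volume_trapped_eq_zero G hGc _ p l u (hstrict p) (hsym p) hγ hγL.le
      (norm_fderiv_le_of_lip' ℝ hL (Eventually.of_forall fun x => hlip x p)) hu
  choose! r hr hnull using hloc
  obtain ⟨t, htD, htc, htcov⟩ := TopologicalSpace.countable_cover_nhdsWithin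
    (f := fun p => Metric.ball p (r p)) (s := D)
    (fun p hp => mem_nhdsWithin_of_mem_nhds (Metric.ball_mem_nhds p (hr p hp)))
  have hbig : volume (⋃ p ∈ t, ⋃ k : ℕ,
      g^[k] ⁻¹' {x | ∀ j : ℕ, g^[j] x ∈ Metric.closedBall p (r p)}) = 0 := by
    rw [measure_biUnion_null_iff htc]
    intro p hp
    rw [measure_iUnion_null_iff]
    exact volume_iterate_preimage_eq_zero (antilipschitz_step hlip hγ hγL l) (hnull p (htD hp))
  refine measure_mono_null ?_ hbig
  rintro x ⟨q, hq, hlim⟩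
  obtain ⟨p, hp, hqp⟩ := Set.mem_iUnion₂.mp (htcov hq)
  obtain ⟨N, hN⟩ := eventually_atTop.mp (hlim.eventually_mem (Metric.isOpen_ball.mem_nhds hqp))
  refine Set.mem_iUnion₂.mpr ⟨p, hp, Set.mem_iUnion.mpr ⟨N, fun j => ?_⟩⟩
  rw [← Function.iterate_add_apply]
  exact Metric.ball_subset_closedBall (hN _ (by omega))

end Saddle

/-! ### The small-gradient component and the Hessian -/

lemma isClosed_connectedComponentIn_of_isClosed {X : Type*} [TopologicalSpace X] {F : Set X}
    (hF : IsClosed F) (x : X) : IsClosed (connectedComponentIn F x) := by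
  by_cases hx : x ∈ F
  · refine isClosed_of_closure_subset ?_
    exact isPreconnected_connectedComponentIn.closure.subset_connectedComponentIn
      (subset_closure (mem_connectedComponentIn hx))
      (closure_minimal (connectedComponentIn_subset F x) hF)
  · rw [connectedComponentIn_eq_empty hx]
    exact isClosed_empty

/-- The derivative of the gradient of a `C²` function is symmetric. -/
lemma inner_fderiv_gradient_symm {E : Type*} [NormedAddCommGroup E] [InnerProductSpace ℝ E]
    [CompleteSpace E] {f : E → ℝ} (hf : ContDiff ℝ 2 f) (p v w : E) :
    ⟪fderiv ℝ (gradient f) p v, w⟫ = ⟪v, fderiv ℝ (gradient f) p w⟫ := by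
  have hd : DifferentiableAt ℝ (fderiv ℝ f) p :=
    (hf.fderiv_right (m := 1) (by norm_num)).differentiable (by norm_num) p
  have hg : DifferentiableAt ℝ (gradient f) p :=
    ((InnerProductSpace.toDual ℝ E).symm.contDiff.comp
      (hf.fderiv_right (m := 1) (by norm_num))).differentiable (by norm_num) p
  have h1 : ∀ a b, ⟪fderiv ℝ (gradient f) p a, b⟫ = fderiv ℝ (fderiv ℝ f) p a b := by
    intro a b
    -- differentiate the identity `⟪∇f x, b⟫ = Df(x) b` in `x`
    have h2 : HasFDerivAt (fun x => ⟪gradient f x, b⟫) _ p :=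
      hg.hasFDerivAt.inner ℝ (hasFDerivAt_const b p)
    have h3 : HasFDerivAt (fun x => fderiv ℝ f x b) _ p :=
      hd.hasFDerivAt.clm_apply (hasFDerivAt_const b p)
    simp only [inner_gradient_left] at h2
    simpa using congrArg (fun T : E →L[ℝ] ℝ => T a) (h2.unique h3)
  rw [h1, real_inner_comm, h1]
  exact (hf.contDiffAt.isSymmSndFDerivAt (by simp)) v w

/-- Let `f` be `C²` with `L`-Lipschitz gradient, `γ ∈ (0, 1/L)`,
`θ > 0`, `x*` a critical point of `f`, and `Θ(x*)` the connected component of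
`{x : ‖∇f(x)‖ ≤ θ}` containing `x*`.  If every critical point of
`f_l = f + ⟨l, ·⟩` inside `Θ(x*)` is a strict saddle (its Hessian has a
negative eigenvalue), then the set of initial conditions whose regularized
gradient-descent iterates `g_l(x) = x − γ(∇f(x) + l)` converge and stay in
`Θ(x*)` for all iterations has Lebesgue measure zero. -/
theorem regularized_gd_escapes_component {n : ℕ} (f : EuclideanSpace ℝ (Fin n) → ℝ)
    (hf : ContDiff ℝ 2 f) (L : ℝ) (hL : 0 < L)
    (hlip : ∀ x y, ‖gradient f x - gradient f y‖ ≤ L * ‖x - y‖)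
    (γ : ℝ) (hγ : γ ∈ Set.Ioo 0 (1 / L)) (θ : ℝ) (hθ : 0 < θ)
    (xs : EuclideanSpace ℝ (Fin n)) (hxs : gradient f xs = 0)
    (l : EuclideanSpace ℝ (Fin n))
    (hsaddle : ∀ y ∈ connectedComponentIn
        {x : EuclideanSpace ℝ (Fin n) | ‖gradient f x‖ ≤ θ} xs,
      gradient f y + l = 0 → ∃ u, ⟪u, fderiv ℝ (gradient f) y u⟫ < 0) :
    volume {x₀ : EuclideanSpace ℝ (Fin n) |
      (∃ p, Tendsto (fun k => (fun x => x - γ • (gradient f x + l))^[k] x₀) atTop (𝓝 p)) ∧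
      ∀ k : ℕ, (fun x => x - γ • (gradient f x + l))^[k] x₀ ∈
        connectedComponentIn {x : EuclideanSpace ℝ (Fin n) | ‖gradient f x‖ ≤ θ} xs} = 0 := by
  obtain ⟨hγ0, hγ1⟩ := hγ
  have hγL : γ * L < 1 := (lt_div_iff₀ hL).mp hγ1
  have hG1 : ContDiff ℝ 1 (gradient f) :=
    (InnerProductSpace.toDual ℝ (EuclideanSpace ℝ (Fin n))).symm.contDiff.comp
      (hf.fderiv_right (m := 1) (by norm_num))
  have hGc : Continuous (gradient f) := hG1.continuous
  set Θ := connectedComponentIn {x : EuclideanSpace ℝ (Fin n) | ‖gradient f x‖ ≤ θ} xs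
  have hΘ : IsClosed Θ := isClosed_connectedComponentIn_of_isClosed
    (isClosed_le hGc.norm continuous_const) xs
  refine measure_mono_null ?_ (volume_tendsto_saddle_eq_zero (gradient f) hlip hL.le hγ0 hγL
    (fun p => hG1.contDiffAt.hasStrictFDerivAt (by norm_num))
    (inner_fderiv_gradient_symm hf) l {y | y ∈ Θ ∧ gradient f y + l = 0}
    (fun p hp => hsaddle p hp.1 hp.2))
  rintro x ⟨⟨p, hp⟩, hmem⟩
  refine ⟨p, ⟨hΘ.mem_of_tendsto hp (Eventually.of_forall hmem), ?_⟩, hp⟩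
  have hfix := isFixedPt_of_tendsto_iterate hp
    (by fun_prop : Continuous fun x => x - γ • (gradient f x + l)).continuousAt
  have h0 : γ • (gradient f p + l) = 0 := sub_eq_self.mp hfix
  exact (smul_eq_zero.mp h0).resolve_left hγ0.ne'
end
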